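/- arXiv:1602.07272 — 7 statements merged into one kernel-verified Lean document; each statement's English description precedes it below -/
import Mathlib

section
/- Let (Ω, F, P) be a probability space, let I = [a,b] ⊂ ℝ be a compact interval with a < b, and let X : I × Ω → ℝ^d be a jointly measurable stochastic process. Suppose that for Lebesgue-almost every u ∈ I one has liminf_{ε↓0} ε^{−d} ∫_I P(|X_s − X_u| ≤ ε) ds < ∞. Then for P-almost every ω, the occupation measure of the path s ↦ X_s(ω) on I is absolutely continuous with respect to d-dimensional Lebesgue measure on ℝ^d; i.e., the occupation density (local time) L(I, x) exists almost surely. -/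
open MeasureTheory Filter Topology


theorem aux_ac {T : Type*} [MeasurableSpace T] (ν : Measure T) [IsFiniteMeasure ν] (d : ℕ)
    (Y : T → EuclideanSpace ℝ (Fin d)) (hY : Measurable Y)
    (h : ∀ᵐ u ∂ν, Filter.liminf (fun n : ℕ =>
      ν {s | ‖Y s - Y u‖ ≤ (1 / 2 : ℝ) ^ n} / ENNReal.ofReal (((1 / 2 : ℝ) ^ n) ^ d)) atTop < ⊤) :
    (Measure.map Y ν).AbsolutelyContinuous (volume : Measure (EuclideanSpace ℝ (Fin d))) := by
  set μ := Measure.map Y ν with hμ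
  have : IsFiniteMeasure μ := Measure.isFiniteMeasure_map ν Y
  have hb := ae_of_ae_map hY.aemeasurable
    (Besicovitch.ae_tendsto_rnDeriv (volume : Measure (EuclideanSpace ℝ (Fin d))) μ)
  have hpos : ∀ᵐ x ∂μ, (volume : Measure (EuclideanSpace ℝ (Fin d))).rnDeriv μ x ≠ 0 := by
    refine (ae_map_iff (p := fun x =>
      (volume : Measure (EuclideanSpace ℝ (Fin d))).rnDeriv μ x ≠ 0) hY.aemeasurable
      ((Measure.measurable_rnDeriv _ _) (measurableSet_singleton (0 : ENNReal)).compl)).2 ?_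
    filter_upwards [h, hb] with u hu ht h0
    rw [h0] at ht
    obtain ⟨C, hC1, hC2⟩ := exists_between hu
    have hfr := Filter.frequently_lt_of_liminf_lt (by isBoundedDefault) hC1
    have hr : Tendsto (fun n : ℕ => (1 / 2 : ℝ) ^ n) atTop (𝓝[>] 0) :=
      tendsto_nhdsWithin_iff.2 ⟨tendsto_pow_atTop_nhds_zero_of_lt_one (by norm_num) (by norm_num),
        Eventually.of_forall fun n => by simp⟩
    have ht2 := ht.comp hr
    set c := (volume : Measure (EuclideanSpace ℝ (Fin d))) (Metric.ball 0 1) with hc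
    have hc0 : c ≠ 0 := (Metric.measure_ball_pos _ _ one_pos).ne'
    have hcC : 0 < c / C := ENNReal.div_pos hc0 hC2.ne
    have hev := ht2.eventually_lt_const hcC
    obtain ⟨n, hn1, hn2⟩ := (hfr.and_eventually hev).exists
    simp only [Function.comp] at hn2
    set r := (1 / 2 : ℝ) ^ n with hrdef
    have hrpos : 0 < r := by positivity
    have hR0 : ENNReal.ofReal (r ^ d) ≠ 0 := by
      simp only [ne_eq, ENNReal.ofReal_eq_zero, not_le]; positivity
    have hball : μ (Metric.closedBall (Y u) r) = ν {s | ‖Y s - Y u‖ ≤ r} := by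
      rw [hμ, Measure.map_apply hY measurableSet_closedBall]
      simp only [Set.preimage, Metric.mem_closedBall, dist_eq_norm]
    have hvol : (volume : Measure (EuclideanSpace ℝ (Fin d))) (Metric.closedBall (Y u) r)
        = ENNReal.ofReal (r ^ d) * c := by
      rw [Measure.addHaar_closedBall _ _ hrpos.le]
      simp [hc]
    rw [hball, hvol] at hn2
    have h3 : ν {s | ‖Y s - Y u‖ ≤ r} ≤ ENNReal.ofReal (r ^ d) * C := by
      have := (ENNReal.div_le_iff hR0 ENNReal.ofReal_ne_top).1 hn1.le
      rwa [mul_comm]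
    have h4 : c / C ≤ ENNReal.ofReal (r ^ d) * c / ν {s | ‖Y s - Y u‖ ≤ r} := by
      rw [← ENNReal.mul_div_mul_left c C hR0 ENNReal.ofReal_ne_top]
      exact ENNReal.div_le_div_left h3 _
    exact absurd hn2 (not_lt.2 h4)
  refine Measure.AbsolutelyContinuous.mk fun A hA hA0 => ?_
  have h1 : ∫⁻ x in A, (volume : Measure (EuclideanSpace ℝ (Fin d))).rnDeriv μ x ∂μ = 0 :=
    le_antisymm ((Measure.setLIntegral_rnDeriv_le A).trans hA0.le) zero_le
  rw [lintegral_eq_zero_iff (Measure.measurable_rnDeriv _ _)] at h1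
  have h2 := ae_restrict_of_ae (s := A) hpos
  have h3 : ∀ᵐ x ∂(μ.restrict A), False := by
    filter_upwards [h1, h2] with x hx hx2 using hx2 hx
  rw [ae_iff] at h3
  simpa using h3

theorem aux_liminf (d : ℕ) (f : ℝ → ENNReal) (hf : Monotone f)
    (h : Filter.liminf (fun ε : ℝ => f ε / ENNReal.ofReal (ε ^ d)) (𝓝[>] (0 : ℝ)) < ⊤) :
    Filter.liminf (fun n : ℕ => f ((1 / 2 : ℝ) ^ n) / ENNReal.ofReal (((1 / 2 : ℝ) ^ n) ^ d))
      atTop < ⊤ := by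
  obtain ⟨C, hC1, hC2⟩ := exists_between h
  have hfr := Filter.frequently_lt_of_liminf_lt (by isBoundedDefault) hC1
  have hD : ENNReal.ofReal (2 ^ d) * C < ⊤ := ENNReal.mul_lt_top ENNReal.ofReal_lt_top hC2
  refine lt_of_le_of_lt (Filter.liminf_le_of_frequently_le' ?_) hD
  rw [frequently_atTop]
  intro N
  have hev : ∀ᶠ ε : ℝ in 𝓝[>] 0, ε ∈ Set.Ioo 0 ((1 / 2 : ℝ) ^ N) :=
    Ioo_mem_nhdsGT (by positivity)
  obtain ⟨ε, h1, h2, h3⟩ := (hfr.and_eventually hev).exists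
  obtain ⟨n, hn1, hn2⟩ := exists_nat_pow_near_of_lt_one h2 
    (h3.le.trans (pow_le_one₀ (by norm_num) (by norm_num))) (by norm_num : (0:ℝ) < 1/2) (by norm_num)
  refine ⟨n + 1, ?_, ?_⟩
  · by_contra hlt
    have : (1 / 2 : ℝ) ^ N ≤ (1 / 2 : ℝ) ^ (n + 1) :=
      pow_le_pow_of_le_one (by norm_num) (by norm_num) (by omega)
    linarith
  · set r := (1 / 2 : ℝ) ^ (n + 1) with hr
    have hrpos : 0 < r := by positivity
    have hεr : ε ≤ 2 * r := by rw [hr, pow_succ]; linarith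
    have hR0 : ENNReal.ofReal (r ^ d) ≠ 0 := by
      simp only [ne_eq, ENNReal.ofReal_eq_zero, not_le]; positivity
    have hE0 : ENNReal.ofReal (ε ^ d) ≠ 0 := by
      simp only [ne_eq, ENNReal.ofReal_eq_zero, not_le]; positivity
    rw [ENNReal.div_le_iff hR0 ENNReal.ofReal_ne_top]
    calc f r ≤ f ε := hf hn1.le
      _ ≤ C * ENNReal.ofReal (ε ^ d) := (ENNReal.div_le_iff hE0 ENNReal.ofReal_ne_top).1 h1.le
      _ ≤ C * ENNReal.ofReal ((2 * r) ^ d) := by gcongr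
      _ = ENNReal.ofReal (2 ^ d) * C * ENNReal.ofReal (r ^ d) := by
        rw [mul_pow, ENNReal.ofReal_mul (by positivity)]; ring

/-- Existence of the occupation density (local time): if for a.e. `u ∈ [a,b]` the
liminf condition `liminf_{ε↓0} ε^{-d} ∫_I P(|X_s - X_u| ≤ ε) ds < ∞` holds, then
almost surely the occupation measure of the path `s ↦ X s ω` on `[a,b]` is
absolutely continuous with respect to Lebesgue measure on `ℝ^d`. -/
theorem stmt_0
    {Ω : Type*} [MeasurableSpace Ω] (P : Measure Ω) [IsProbabilityMeasure P]
    (d : ℕ) (a b : ℝ) (hab : a < b)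
    (X : ℝ → Ω → EuclideanSpace ℝ (Fin d))
    (hX : Measurable (Function.uncurry X))
    (hliminf : ∀ᵐ u ∂(volume.restrict (Set.Icc a b)),
      Filter.liminf
        (fun ε : ℝ =>
          (∫⁻ s in Set.Icc a b, P {ω | ‖X s ω - X u ω‖ ≤ ε}) / ENNReal.ofReal (ε ^ d))
        (𝓝[>] (0 : ℝ)) < ⊤) :
    ∀ᵐ ω ∂P,
      (Measure.map (fun s => X s ω) (volume.restrict (Set.Icc a b))).AbsolutelyContinuous
        (volume : Measure (EuclideanSpace ℝ (Fin d))) := by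
  set ν := (volume : Measure ℝ).restrict (Set.Icc a b) with hν
  have hfin : IsFiniteMeasure ν := ⟨by simp [hν]⟩
  have hmeasS : ∀ ε : ℝ, MeasurableSet {p : (ℝ × Ω) × ℝ | ‖X p.2 p.1.2 - X p.1.1 p.1.2‖ ≤ ε} := by
    intro ε
    have e1 : Measurable fun p : (ℝ × Ω) × ℝ => X p.2 p.1.2 :=
      hX.comp (f := fun p : (ℝ × Ω) × ℝ => (p.2, p.1.2)) (by fun_prop)
    have e2 : Measurable fun p : (ℝ × Ω) × ℝ => X p.1.1 p.1.2 :=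
      hX.comp (f := fun p : (ℝ × Ω) × ℝ => (p.1.1, p.1.2)) (by fun_prop)
    exact measurableSet_le (e1.sub e2).norm measurable_const
  let F : ℕ → ℝ × Ω → ENNReal := fun n q =>
    ν {s | ‖X s q.2 - X q.1 q.2‖ ≤ (1 / 2 : ℝ) ^ n} / ENNReal.ofReal (((1 / 2 : ℝ) ^ n) ^ d)
  have hF : ∀ n, Measurable (F n) := fun n =>
    (measurable_measure_prodMk_left (ν := ν) (hmeasS ((1 / 2 : ℝ) ^ n))).div_const _
  have hL : Measurable fun q => Filter.liminf (fun n => F n q) atTop := Measurable.liminf hF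
  have hset : MeasurableSet {q : ℝ × Ω | Filter.liminf (fun n => F n q) atTop < ⊤} :=
    measurableSet_lt hL measurable_const
  have key : ∀ᵐ u ∂ν, ∀ᵐ ω ∂P, Filter.liminf (fun n => F n (u, ω)) atTop < ⊤ := by
    filter_upwards [hliminf] with u hu
    have hu2 := aux_liminf d (fun ε => ∫⁻ s, P {ω | ‖X s ω - X u ω‖ ≤ ε} ∂ν) (by
      intro x y hxy
      exact lintegral_mono fun s => measure_mono fun ω hω => le_trans hω hxy) hu
    have hFub : ∀ n : ℕ, (∫⁻ s, P {ω | ‖X s ω - X u ω‖ ≤ (1 / 2 : ℝ) ^ n} ∂ν) /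
        ENNReal.ofReal (((1 / 2 : ℝ) ^ n) ^ d) = ∫⁻ ω, F n (u, ω) ∂P := by
      intro n
      have hm : MeasurableSet {p : ℝ × Ω | ‖X p.1 p.2 - X u p.2‖ ≤ (1 / 2 : ℝ) ^ n} :=
        (hmeasS ((1 / 2 : ℝ) ^ n)).preimage
          (f := fun p : ℝ × Ω => (((u, p.2) : ℝ × Ω), p.1)) (by fun_prop)
      have e := (Measure.prod_apply (μ := ν) (ν := P) hm).symm.trans (Measure.prod_apply_symm hm)
      simp only [Set.preimage_ofPred_eq] at e
      simp only [F, ENNReal.div_eq_inv_mul]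
      have hmm : Measurable fun ω => ν {s | ‖X s ω - X u ω‖ ≤ (1 / 2 : ℝ) ^ n} :=
        measurable_measure_prodMk_right hm
      rw [lintegral_const_mul _ hmm, e]
    simp only [hFub] at hu2
    have hmu : ∀ n, Measurable fun ω => F n (u, ω) := fun n =>
      (hF n).comp measurable_prodMk_left
    have hfat := (lintegral_liminf_le (μ := P) hmu).trans_lt hu2
    exact ae_lt_top (hL.comp measurable_prodMk_left) hfat.ne
  have key2 := (Measure.ae_ae_comm (μ := ν) (ν := P)
    (p := fun u ω => Filter.liminf (fun n => F n (u, ω)) atTop < ⊤) hset).1 key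
  filter_upwards [key2] with ω hω
  exact aux_ac ν d (fun s => X s ω) (hX.comp measurable_prodMk_right) hω
end

section
/- Let H ∈ (0,1), T > 0, and let B : [0,T] × Ω → ℝ be a stochastic process on a probability space (Ω, F, P) such that for all 0 ≤ s ≤ t ≤ T, the law of the increment B_t − B_s is the real Gaussian measure with mean 0 and variance (t−s)^{2H}. Then for every γ ∈ (0, H) there exists a modification B̃ of B (i.e., for each t ∈ [0,T], B̃_t = B_t P-almost surely) all of whose sample paths are γ-Hölder continuous on [0,T]. -/
open MeasureTheory ProbabilityTheory Set

section HolderAux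
open Filter Topology

/-- dyadic floor -/
noncomputable def dyfl (t : ℝ) (n : ℕ) : ℝ := (⌊t * 2 ^ n⌋₊ : ℝ) / 2 ^ n

lemma dyfl_le {t : ℝ} (ht : 0 ≤ t) (n : ℕ) : dyfl t n ≤ t := by
  unfold dyfl
  rw [div_le_iff₀ (by positivity)]
  exact Nat.floor_le (by positivity)

lemma dyfl_nonneg (t : ℝ) (n : ℕ) : 0 ≤ dyfl t n := by
  unfold dyfl; positivity

lemma sub_dyfl_le {t : ℝ} (n : ℕ) : t - dyfl t n ≤ (1 / 2) ^ n := by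
  unfold dyfl
  have h := (Nat.lt_floor_add_one (t * 2 ^ n)).le
  have h2 : (0 : ℝ) < 2 ^ n := by positivity
  rw [one_div, inv_pow, sub_le_iff_le_add, ← one_div, ← add_div, le_div_iff₀ h2]
  linarith

lemma floor_le_pow {t : ℝ} (ht1 : t ≤ 1) (n : ℕ) : ⌊t * 2 ^ n⌋₊ ≤ 2 ^ n := by
  apply Nat.floor_le_of_le
  push_cast
  nlinarith [pow_pos (two_pos : (0 : ℝ) < 2) n]

lemma step_bound (f : ℝ → ℝ) (K r : ℝ) (hK : 0 ≤ K) (hr : 0 < r)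
    (h : ∀ n k : ℕ, k < 2 ^ n → |f ((k + 1 : ℕ) / 2 ^ n) - f (k / 2 ^ n)| ≤ K * r ^ n)
    {t : ℝ} (ht : 0 ≤ t) (ht1 : t ≤ 1) (n : ℕ) :
    dist (f (dyfl t n)) (f (dyfl t (n + 1))) ≤ K * r * r ^ n := by
  unfold dyfl
  set j := ⌊t * 2 ^ n⌋₊ with hj
  have hm : ⌊t * 2 ^ (n + 1)⌋₊ = 2 * j ∨ ⌊t * 2 ^ (n + 1)⌋₊ = 2 * j + 1 := by
    have h1 : (j : ℝ) ≤ t * 2 ^ n := Nat.floor_le (by positivity)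
    have h2 : t * 2 ^ n < j + 1 := Nat.lt_floor_add_one _
    have h3 : 2 * j ≤ ⌊t * 2 ^ (n + 1)⌋₊ := by
      apply Nat.le_floor
      push_cast
      rw [pow_succ]; linarith
    have h4 : ⌊t * 2 ^ (n + 1)⌋₊ < 2 * j + 2 := by
      rw [Nat.floor_lt (by positivity)]
      push_cast
      rw [pow_succ]; linarith
    omega
  have he : (j : ℝ) / 2 ^ n = ((2 * j : ℕ) : ℝ) / 2 ^ (n + 1) := by
    push_cast
    rw [pow_succ]; field_simp
  rw [he]
  rcases hm with hm | hm
  · rw [hm, dist_self]; positivity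
  · have hle := floor_le_pow ht1 (n + 1)
    rw [hm] at hle
    rw [hm, dist_comm, Real.dist_eq]
    have := h (n + 1) (2 * j) (by omega)
    rw [pow_succ r] at this
    linarith

lemma exists_scale {x : ℝ} (h0 : 0 < x) (h1 : x ≤ 1) :
    ∃ n : ℕ, (1 / 2 : ℝ) ^ (n + 1) < x ∧ x ≤ (1 / 2) ^ n :=
  exists_nat_pow_near_of_lt_one h0 h1 (by norm_num) (by norm_num)

lemma same_scale (f : ℝ → ℝ) (K r : ℝ) (hK : 0 ≤ K) (hr : 0 < r)
    (h : ∀ n k : ℕ, k < 2 ^ n → |f ((k + 1 : ℕ) / 2 ^ n) - f (k / 2 ^ n)| ≤ K * r ^ n)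
    {s t : ℝ} (hs : 0 ≤ s) (hst : s ≤ t) (ht1 : t ≤ 1) (n : ℕ) (hn : t - s ≤ (1 / 2) ^ n) :
    |f (dyfl t n) - f (dyfl s n)| ≤ K * r ^ n := by
  unfold dyfl
  have h2 : (0 : ℝ) < 2 ^ n := by positivity
  set j := ⌊s * 2 ^ n⌋₊ with hj
  have hm : ⌊t * 2 ^ n⌋₊ = j ∨ ⌊t * 2 ^ n⌋₊ = j + 1 := by
    have h1 : j ≤ ⌊t * 2 ^ n⌋₊ := Nat.floor_le_floor (by gcongr)
    have h3 : ⌊t * 2 ^ n⌋₊ ≤ ⌊s * 2 ^ n + 1⌋₊ := by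
      apply Nat.floor_le_floor
      rw [one_div, inv_pow, ← one_div, le_div_iff₀ h2] at hn
      linarith
    rw [Nat.floor_add_one (by positivity)] at h3
    omega
  rcases hm with hm | hm
  · rw [hm, sub_self, abs_zero]; positivity
  · have hle := floor_le_pow ht1 n
    rw [hm] at hle ⊢
    exact h n j (by omega)

lemma det_tendsto (f : ℝ → ℝ) (K r : ℝ) (hK : 0 ≤ K) (hr : 0 < r) (hr1 : r < 1)
    (h : ∀ n k : ℕ, k < 2 ^ n → |f ((k + 1 : ℕ) / 2 ^ n) - f (k / 2 ^ n)| ≤ K * r ^ n)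
    {t : ℝ} (ht : 0 ≤ t) (ht1 : t ≤ 1) :
    Filter.Tendsto (fun n => f (dyfl t n)) Filter.atTop
      (nhds (limUnder Filter.atTop (fun n => f (dyfl t n)))) :=
  (cauchySeq_of_le_geometric r (K * r) hr1 (step_bound f K r hK hr h ht ht1)).tendsto_limUnder

lemma det_holder (f : ℝ → ℝ) (K γ : ℝ) (hK : 0 ≤ K) (hγ : 0 < γ)
    (h : ∀ n k : ℕ, k < 2 ^ n → |f ((k + 1 : ℕ) / 2 ^ n) - f (k / 2 ^ n)| ≤
      K * ((1 / 2 : ℝ) ^ γ) ^ n) :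
    ∃ C : ℝ, ∀ s t : ℝ, 0 ≤ s → s ≤ t → t ≤ 1 →
      |limUnder Filter.atTop (fun n => f (dyfl t n)) -
        limUnder Filter.atTop (fun n => f (dyfl s n))| ≤ C * (t - s) ^ γ := by
  set r : ℝ := (1 / 2 : ℝ) ^ γ with hrdef
  have hr : 0 < r := by positivity
  have hr1 : r < 1 := Real.rpow_lt_one (by norm_num) (by norm_num) hγ
  set D := 2 * (K * r / (1 - r)) + K with hD
  have hD0 : 0 ≤ D := by
    have : 0 < 1 - r := by linarith
    positivity
  refine ⟨D / r, fun s t hs hst ht1 => ?_⟩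
  rcases hst.eq_or_lt with rfl | hlt
  · simp [Real.zero_rpow hγ.ne']
  obtain ⟨n, hn1, hn2⟩ := exists_scale (sub_pos.2 hlt) (by linarith)
  have a1 := dist_le_of_le_geometric_of_tendsto r (K * r) hr1
    (step_bound f K r hK hr h (hs.trans hst) ht1)
    (det_tendsto f K r hK hr hr1 h (hs.trans hst) ht1) n
  have a2 := dist_le_of_le_geometric_of_tendsto r (K * r) hr1
    (step_bound f K r hK hr h hs (hst.trans ht1))
    (det_tendsto f K r hK hr hr1 h hs (hst.trans ht1)) n
  have a3 := same_scale f K r hK hr h hs hst ht1 n hn2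
  rw [Real.dist_eq] at a1 a2
  have key : r ^ (n + 1) ≤ (t - s) ^ γ := by
    have : r ^ (n + 1) = ((1 / 2 : ℝ) ^ (n + 1)) ^ γ := by
      rw [hrdef, ← Real.rpow_natCast, ← Real.rpow_natCast, ← Real.rpow_mul (by norm_num),
        ← Real.rpow_mul (by norm_num), mul_comm]
    rw [this]
    exact Real.rpow_le_rpow (by positivity) hn1.le hγ.le
  have e : K * r * r ^ n / (1 - r) = K * r / (1 - r) * r ^ n := by ring
  rw [e] at a1 a2
  calc _ ≤ D * r ^ n := by
        rw [abs_le] at *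
        rw [hD]
        constructor <;> linarith [a1.1, a1.2, a2.1, a2.2, a3.1, a3.2]
    _ = D / r * r ^ (n + 1) := by rw [pow_succ]; field_simp
    _ ≤ _ := by gcongr

lemma moment {Ω : Type*} [MeasurableSpace Ω] (P : Measure Ω) [IsProbabilityMeasure P]
    (Z : Ω → ℝ) (x H : ℝ) (hx : 0 ≤ x)
    (hZ : Measure.map Z P = gaussianReal 0 (Real.toNNReal (x ^ (2 * H)))) (p : ℕ) :
    AEMeasurable Z P ∧
    ∫⁻ ω, ‖Z ω‖ₑ ^ p ∂P =
      ENNReal.ofReal (x ^ H) ^ p * ∫⁻ y, ‖y‖ₑ ^ p ∂(gaussianReal 0 1) := by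
  have hm : AEMeasurable Z P := by
    apply AEMeasurable.of_map_ne_zero
    rw [hZ]
    exact IsProbabilityMeasure.ne_zero _
  refine ⟨hm, ?_⟩
  have hc : gaussianReal 0 (Real.toNNReal (x ^ (2 * H))) =
      (gaussianReal 0 1).map (fun y => x ^ H * y) := by
    rw [gaussianReal_map_const_mul]
    congr 1
    · simp
    · ext
      simp only [mul_one, NNReal.coe_mk]
      rw [Real.coe_toNNReal _ (by positivity), mul_comm, Real.rpow_mul hx]
      norm_cast
  have h1 : ∫⁻ ω, ‖Z ω‖ₑ ^ p ∂P = ∫⁻ y, ‖y‖ₑ ^ p ∂(Measure.map Z P) := by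
    rw [lintegral_map' (by fun_prop) hm]
  rw [h1, hZ, hc, lintegral_map (by fun_prop) (by fun_prop), ← lintegral_const_mul _ (by fun_prop)]
  congr 1
  ext y
  rw [enorm_mul, mul_pow, Real.enorm_of_nonneg (by positivity)]

lemma moment_fin (p : ℕ) : ∫⁻ y, ‖y‖ₑ ^ p ∂(gaussianReal 0 1) ≠ ⊤ := by
  have := (memLp_id_gaussianReal (μ := 0) (v := 1) (p : NNReal))
  have h := this.eLpNorm_lt_top
  rcases Nat.eq_zero_or_pos p with rfl | hp
  · simp
  have := lintegral_rpow_enorm_lt_top_of_eLpNorm_lt_top (by simpa using hp.ne') (by simp) h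
  simpa using this.ne

lemma ae_tsum_ne_top {Ω : Type*} [MeasurableSpace Ω] (P : Measure Ω)
    (Y : ℕ → Ω → ENNReal) (hY : ∀ n, AEMeasurable (Y n) P) (C q : ENNReal) (hC : C ≠ ⊤)
    (hq : q < 1) (h : ∀ n, ∫⁻ ω, Y n ω ∂P ≤ C * q ^ n) : ∀ᵐ ω ∂P, ∑' n, Y n ω ≠ ⊤ := by
  have h1 : ∫⁻ ω, ∑' n, Y n ω ∂P ≠ ⊤ := by
    rw [lintegral_tsum hY]
    refine ne_top_of_le_ne_top ?_ (ENNReal.tsum_le_tsum h)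
    rw [ENNReal.tsum_mul_left, ENNReal.tsum_geometric]
    refine ENNReal.mul_ne_top hC ?_
    rw [Ne, ENNReal.inv_eq_top]
    exact (tsub_pos_of_lt hq).ne'
  filter_upwards [ae_lt_top' (AEMeasurable.tsum hY) h1] with ω hω using hω.ne

lemma good_ae {Ω : Type*} [MeasurableSpace Ω] (P : Measure Ω) [IsProbabilityMeasure P]
    (H T : ℝ) (hT : 0 < T) (B : ℝ → Ω → ℝ)
    (hB : ∀ s t : ℝ, 0 ≤ s → s ≤ t → t ≤ T →
      Measure.map (fun ω => B t ω - B s ω) P =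
        gaussianReal 0 (Real.toNNReal ((t - s) ^ (2 * H)))) (γ : ℝ) (hγH : γ < H) :
    ∀ᵐ ω ∂P, ∃ K : ℝ, 0 ≤ K ∧ ∀ n k : ℕ, k < 2 ^ n →
      |B (T * ((k + 1 : ℕ) / 2 ^ n)) ω - B (T * (k / 2 ^ n)) ω| ≤
      K * ((1 / 2 : ℝ) ^ γ) ^ n := by
  set r : ℝ := (1 / 2 : ℝ) ^ γ with hrdef
  have hr : 0 < r := by positivity
  set a : ℝ := (1 / 2 : ℝ) ^ H with hadef
  have ha : 0 < a := by positivity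
  have har : a / r < 1 := by
    rw [hadef, hrdef, ← Real.rpow_sub (by norm_num)]
    exact Real.rpow_lt_one (by norm_num) (by norm_num) (by linarith)
  obtain ⟨p', hp'⟩ := exists_pow_lt_of_lt_one (show (0 : ℝ) < 1 / 2 by norm_num) har
  obtain ⟨p, hp0, hp⟩ : ∃ p : ℕ, p ≠ 0 ∧ (a / r) ^ p < 1 / 2 := by
    refine ⟨p', ?_, hp'⟩
    rintro rfl
    norm_num at hp'
  have hmom : ∀ n k : ℕ, k < 2 ^ n → _ := fun n k hk =>
    moment P (fun ω => B (T * ((k + 1 : ℕ) / 2 ^ n)) ω - B (T * (k / 2 ^ n)) ω)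
      (T * (1 / 2) ^ n) H (by positivity) (by
        have h2 : (0 : ℝ) < 2 ^ n := by positivity
        have hk' : ((k + 1 : ℕ) : ℝ) ≤ 2 ^ n := by exact_mod_cast hk
        rw [hB _ _ (by positivity) (by gcongr; omega)
          (by
            have : ((k + 1 : ℕ) : ℝ) / 2 ^ n ≤ 1 := by rwa [div_le_one h2]
            nlinarith)]
        congr 3
        push_cast
        rw [one_div, inv_pow]
        field_simp
        ring) p
  set M := ∫⁻ y, ‖y‖ₑ ^ p ∂(gaussianReal 0 1) with hM
  let Y : ℕ → Ω → ENNReal := fun n ω => ∑ k ∈ Finset.range (2 ^ n),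
    ENNReal.ofReal ((r ^ n)⁻¹) ^ p *
      ‖B (T * ((k + 1 : ℕ) / 2 ^ n)) ω - B (T * (k / 2 ^ n)) ω‖ₑ ^ p
  have hmeas : ∀ n, ∀ k ∈ Finset.range (2 ^ n), AEMeasurable (fun ω =>
      ENNReal.ofReal ((r ^ n)⁻¹) ^ p *
      ‖B (T * ((k + 1 : ℕ) / 2 ^ n)) ω - B (T * (k / 2 ^ n)) ω‖ₑ ^ p) P := fun n k hk =>
    (((hmom n k (Finset.mem_range.1 hk)).1.enorm).pow_const p).const_mul _
  have key := ae_tsum_ne_top P Y (fun n => Finset.aemeasurable_fun_sum _ (hmeas n))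
    (ENNReal.ofReal (T ^ H) ^ p * M) (ENNReal.ofReal (2 * (a / r) ^ p))
    (ENNReal.mul_ne_top (by simp) (moment_fin p))
    (by rw [ENNReal.ofReal_lt_one]; linarith)
    (by
      intro n
      rw [lintegral_finsetSum' _ (hmeas n)]
      have : ∀ k ∈ Finset.range (2 ^ n), ∫⁻ ω, ENNReal.ofReal ((r ^ n)⁻¹) ^ p *
          ‖B (T * ((k + 1 : ℕ) / 2 ^ n)) ω - B (T * (k / 2 ^ n)) ω‖ₑ ^ p ∂P =
          ENNReal.ofReal (T ^ H) ^ p * M * ENNReal.ofReal ((a / r) ^ p) ^ n := by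
        intro k hk
        have hk := hmom n k (Finset.mem_range.1 hk)
        rw [lintegral_const_mul'' _ (hk.1.enorm.pow_const p), hk.2, ← mul_assoc,
          mul_right_comm _ M]
        congr 1
        rw [← ENNReal.ofReal_pow (by positivity), ← ENNReal.ofReal_pow (by positivity),
          ← ENNReal.ofReal_pow (by positivity), ← ENNReal.ofReal_pow (by positivity),
          ← ENNReal.ofReal_mul (by positivity), ← ENNReal.ofReal_mul (by positivity)]
        congr 1
        rw [Real.mul_rpow hT.le (by positivity)]
        have : ((1 / 2 : ℝ) ^ n) ^ H = a ^ n := by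
          rw [hadef, ← Real.rpow_natCast, ← Real.rpow_natCast, ← Real.rpow_mul (by norm_num),
            ← Real.rpow_mul (by norm_num), mul_comm]
        rw [this, div_pow, div_pow, ← pow_mul, ← pow_mul, mul_pow, inv_pow, ← pow_mul, ← pow_mul,
          mul_comm n p]
        field_simp
      rw [Finset.sum_congr rfl this, Finset.sum_const, Finset.card_range, nsmul_eq_mul,
        ENNReal.ofReal_mul (by norm_num), mul_pow]
      push_cast
      rw [ENNReal.ofReal_ofNat]
      apply le_of_eq
      ring)
  filter_upwards [key] with ω hω
  refine ⟨(∑' n, Y n ω).toReal + 1, by positivity, fun n k hk => ?_⟩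
  set S := ∑' n, Y n ω with hS
  have h1 : ENNReal.ofReal ((r ^ n)⁻¹) ^ p *
      ‖B (T * ((k + 1 : ℕ) / 2 ^ n)) ω - B (T * (k / 2 ^ n)) ω‖ₑ ^ p ≤ S :=
    le_trans (Finset.single_le_sum (f := fun k : ℕ => ENNReal.ofReal ((r ^ n)⁻¹) ^ p *
      ‖B (T * ((k + 1 : ℕ) / 2 ^ n)) ω - B (T * (k / 2 ^ n)) ω‖ₑ ^ p) (fun _ _ => zero_le)
      (Finset.mem_range.2 hk)) (ENNReal.le_tsum (f := fun n => Y n ω) n)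
  have h2 := ENNReal.toReal_mono hω h1
  rw [ENNReal.toReal_mul, ENNReal.toReal_pow, ENNReal.toReal_pow,
    ENNReal.toReal_ofReal (by positivity), toReal_enorm, ← mul_pow, Real.norm_eq_abs] at h2
  have hS0 : 0 ≤ S.toReal := ENNReal.toReal_nonneg
  have h3 : S.toReal ≤ (S.toReal + 1) ^ p :=
    le_trans (by linarith) (le_self_pow₀ (by linarith : (1 : ℝ) ≤ S.toReal + 1) hp0)
  have h4 := le_of_pow_le_pow_left₀ hp0 (by linarith) (h2.trans h3)
  rw [inv_mul_eq_div, div_le_iff₀ (by positivity)] at h4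
  exact h4

lemma tendsto_ae {Ω : Type*} [MeasurableSpace Ω] (P : Measure Ω) [IsProbabilityMeasure P]
    (H T : ℝ) (hH : 0 < H) (hT : 0 < T) (B : ℝ → Ω → ℝ)
    (hB : ∀ s t : ℝ, 0 ≤ s → s ≤ t → t ≤ T →
      Measure.map (fun ω => B t ω - B s ω) P =
        gaussianReal 0 (Real.toNNReal ((t - s) ^ (2 * H)))) (u : ℝ) (hu : 0 ≤ u) (hu1 : u ≤ 1) :
    ∀ᵐ ω ∂P, Tendsto (fun n => B (T * dyfl u n) ω) atTop (𝓝 (B (T * u) ω)) := by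
  have hmom : ∀ n : ℕ, _ := fun n =>
    moment P (fun ω => B (T * u) ω - B (T * dyfl u n) ω)
      (T * u - T * dyfl u n) H
      (by have := dyfl_le hu n; rw [sub_nonneg]; gcongr)
      (hB _ _ (by have := dyfl_nonneg u n; positivity)
        (by have := dyfl_le hu n; gcongr) (by nlinarith)) 1
  set M := ∫⁻ y, ‖y‖ₑ ^ 1 ∂(gaussianReal 0 1) with hM
  set a : ℝ := (1 / 2 : ℝ) ^ H with hadef
  have ha : 0 < a := by positivity
  have key := ae_tsum_ne_top P (fun n ω => ‖B (T * u) ω - B (T * dyfl u n) ω‖ₑ ^ 1)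
    (fun n => (hmom n).1.enorm.pow_const 1)
    (ENNReal.ofReal (T ^ H) * M) (ENNReal.ofReal a)
    (ENNReal.mul_ne_top (by simp) (moment_fin 1))
    (by
      rw [ENNReal.ofReal_lt_one]
      exact Real.rpow_lt_one (by norm_num) (by norm_num) hH)
    (by
      intro n
      rw [(hmom n).2, pow_one, mul_right_comm, ← ENNReal.ofReal_pow ha.le,
        ← ENNReal.ofReal_mul (by positivity)]
      gcongr
      have : ((1 / 2 : ℝ) ^ n) ^ H = a ^ n := by
        rw [hadef, ← Real.rpow_natCast, ← Real.rpow_natCast, ← Real.rpow_mul (by norm_num),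
          ← Real.rpow_mul (by norm_num), mul_comm]
      rw [← this, ← Real.mul_rpow hT.le (by positivity), ← mul_sub]
      have h1 := sub_dyfl_le (t := u) n
      have h2 := dyfl_le hu n
      have h3 : 0 ≤ u - dyfl u n := by linarith
      apply Real.rpow_le_rpow (by positivity) (by gcongr) hH.le)
  filter_upwards [key] with ω hω
  have h := ENNReal.tendsto_atTop_zero_of_tsum_ne_top hω
  simp only [pow_one] at h
  have h2 := (ENNReal.tendsto_toReal (ENNReal.zero_ne_top)).comp h
  rw [tendsto_iff_norm_sub_tendsto_zero]
  refine h2.congr fun n => ?_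
  simp [norm_sub_rev, Function.comp]

end HolderAux

/-- A process on `[0,T]` whose increments `B_t - B_s` are centered Gaussian with
variance `(t-s)^{2H}` (e.g. a coordinate of fractional Brownian motion with Hurst
parameter `H`) admits, for every `γ ∈ (0,H)`, a modification all of whose sample
paths are `γ`-Hölder continuous on `[0,T]`. -/
theorem stmt_2
    {Ω : Type*} [MeasurableSpace Ω] (P : Measure Ω) [IsProbabilityMeasure P]
    (H T : ℝ) (hH0 : 0 < H) (hH1 : H < 1) (hT : 0 < T)
    (B : ℝ → Ω → ℝ)
    (hB : ∀ s t : ℝ, 0 ≤ s → s ≤ t → t ≤ T →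
      Measure.map (fun ω => B t ω - B s ω) P =
        gaussianReal 0 (Real.toNNReal ((t - s) ^ (2 * H)))) :
    ∀ γ : ℝ, 0 < γ → γ < H →
      ∃ B' : ℝ → Ω → ℝ,
        (∀ t ∈ Icc (0 : ℝ) T, ∀ᵐ ω ∂P, B' t ω = B t ω) ∧
        (∀ ω, ∃ K : ℝ, ∀ s ∈ Icc (0 : ℝ) T, ∀ t ∈ Icc (0 : ℝ) T,
          |B' t ω - B' s ω| ≤ K * |t - s| ^ γ) := by
  intro γ hγ hγH
  classical
  let G : Ω → Prop := fun ω => ∃ K : ℝ, 0 ≤ K ∧ ∀ n k : ℕ, k < 2 ^ n →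
      |B (T * ((k + 1 : ℕ) / 2 ^ n)) ω - B (T * (k / 2 ^ n)) ω| ≤
      K * ((1 / 2 : ℝ) ^ γ) ^ n
  refine ⟨fun t ω => if G ω then
    Filter.atTop.limUnder (fun n => B (T * dyfl (t / T) n) ω) else 0, ?_, ?_⟩
  · intro t ht
    filter_upwards [good_ae P H T hT B hB γ hγH, tendsto_ae P H T hH0 hT B hB (t / T)
      (div_nonneg ht.1 hT.le) ((div_le_one hT).2 ht.2)] with ω h1 h2
    have hG : G ω := h1
    rw [mul_div_cancel₀ _ hT.ne'] at h2
    simp only [hG, if_true]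
    exact h2.limUnder_eq
  · intro ω
    by_cases hG : G ω
    swap
    · exact ⟨0, fun s _ t _ => by simp [hG]⟩
    obtain ⟨K, hK, h⟩ := id hG
    obtain ⟨C, hC⟩ := det_holder (fun u => B (T * u) ω) K γ hK hγ h
    have main : ∀ s ∈ Icc (0 : ℝ) T, ∀ t ∈ Icc (0 : ℝ) T, s ≤ t →
        |Filter.atTop.limUnder (fun n => B (T * dyfl (t / T) n) ω) -
          Filter.atTop.limUnder (fun n => B (T * dyfl (s / T) n) ω)| ≤
          C / T ^ γ * |t - s| ^ γ := by
      intro s hs t ht hst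
      have := hC (s / T) (t / T) (div_nonneg hs.1 hT.le) (by gcongr) ((div_le_one hT).2 ht.2)
      rw [← sub_div, Real.div_rpow (by linarith) hT.le] at this
      rw [abs_of_nonneg (sub_nonneg.2 hst)]
      calc _ ≤ _ := this
        _ = _ := by ring
    refine ⟨C / T ^ γ, fun s hs t ht => ?_⟩
    simp only [hG, if_true]
    rcases le_total s t with hst | hst
    · exact main s hs t ht hst
    · rw [abs_sub_comm, abs_sub_comm t s]
      exact main t ht s hs hst
end

section
/- Let α ∈ [0,1) and let n ≥ 2 be an integer. There exists a constant C > 0, depending only on α and n, such that for all real numbers 0 ≤ s ≤ t, the iterated integral over the ordered simplex satisfies ∫_{s ≤ u₁ ≤ u₂ ≤ ⋯ ≤ u_n ≤ t} ∏_{i=2}^{n} (u_i − u_{i−1})^{−α} du₁ ⋯ du_n ≤ C (t − s)^{(1−α)(n−1)+1}. -/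
open MeasureTheory

lemma chain_lintegral (g : ℝ → ENNReal) (hg : Measurable g) (n : ℕ) :
    ∀ f : ℝ → ENNReal, Measurable f →
    ∫⁻ u : Fin (n + 1) → ℝ, f (u 0) * ∏ i : Fin n, g (u i.succ - u i.castSucc)
      = (∫⁻ x, f x) * (∫⁻ x, g x) ^ n := by
  induction n with
  | zero =>
    intro f hf
    have h := (volume_preserving_funUnique (Fin 1) ℝ).lintegral_comp hf
    simp only [Finset.univ_eq_empty, Finset.prod_empty, mul_one, pow_zero]
    rw [← h]
    congr!
  | succ n ih =>
    intro f hf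
    have h := (volume_preserving_piFinSuccAbove (fun _ : Fin (n + 2) => ℝ) 0).symm
    rw [← h.lintegral_comp_emb (MeasurableEquiv.measurableEmbedding _)]
    rw [Measure.volume_eq_prod, lintegral_prod _ (by
      apply Measurable.aemeasurable
      apply Measurable.comp (g := fun u : Fin (n + 2) → ℝ =>
        f (u 0) * ∏ i : Fin (n + 1), g (u i.succ - u i.castSucc)) _ (MeasurableEquiv.measurable _)
      fun_prop)]
    have key : ∀ x : ℝ, ∀ y : Fin (n + 1) → ℝ,
        (MeasurableEquiv.piFinSuccAbove (fun _ : Fin (n + 2) => ℝ) 0).symm (x, y)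
          = Fin.cons x y := by
      intro x y
      simp [MeasurableEquiv.piFinSuccAbove]
      rfl
    simp only [key, Fin.prod_univ_succ, Fin.cons_zero, Fin.cons_succ, Fin.castSucc_zero,
      ← Fin.succ_castSucc]
    have inner : ∀ x : ℝ, ∫⁻ y : Fin (n + 1) → ℝ,
        f x * (g (y 0 - x) * ∏ i : Fin n, g (y i.succ - y i.castSucc))
          = f x * (∫⁻ x, g x) ^ (n + 1) := by
      intro x
      rw [lintegral_const_mul _ (by fun_prop), ih (fun z => g (z - x)) (by fun_prop),
        lintegral_sub_right_eq_self g x, pow_succ']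
    simp only [inner]
    rw [lintegral_mul_const _ hf]

lemma kernel_lintegral (α : ℝ) (hα1 : α < 1) (r : ℝ) (hr : 0 ≤ r) :
    ∫⁻ x, (Set.Ioc 0 r).indicator (fun x => ENNReal.ofReal (x ^ (-α))) x
      = ENNReal.ofReal (r ^ (1 - α) / (1 - α)) := by
  rw [lintegral_indicator measurableSet_Ioc]
  have hi : IntervalIntegrable (fun x : ℝ => x ^ (-α)) volume 0 r :=
    intervalIntegral.intervalIntegrable_rpow' (by linarith)
  rw [← ofReal_integral_eq_lintegral_ofReal]
  · rw [← intervalIntegral.integral_of_le hr, integral_rpow (Or.inl (by linarith))]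
    rw [Real.zero_rpow (by linarith)]
    congr 1
    ring_nf
  · exact (intervalIntegrable_iff_integrableOn_Ioc_of_le hr).1 hi
  · filter_upwards [ae_restrict_mem measurableSet_Ioc] with x hx
    exact Real.rpow_nonneg hx.1.le _

/-- Iterated integral estimate over the ordered simplex: for `α ∈ [0,1)` and an
integer `n = m + 2 ≥ 2`, there is `C > 0` (depending only on `α` and `n`) such that
for all `0 ≤ s ≤ t`,
`∫_{s ≤ u₁ ≤ ⋯ ≤ u_n ≤ t} ∏_{i=2}^n (u_i - u_{i-1})^{-α} du ≤ C (t-s)^{(1-α)(n-1)+1}`. -/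
theorem stmt_3 (α : ℝ) (hα0 : 0 ≤ α) (hα1 : α < 1) (m : ℕ) :
    ∃ C : ℝ, 0 < C ∧ ∀ s t : ℝ, 0 ≤ s → s ≤ t →
      ∫⁻ u in {u : Fin (m + 2) → ℝ |
          s ≤ u 0 ∧ (∀ i : Fin (m + 1), u i.castSucc ≤ u i.succ) ∧ u (Fin.last (m + 1)) ≤ t},
        ENNReal.ofReal (∏ i : Fin (m + 1), (u i.succ - u i.castSucc) ^ (-α)) ≤
      ENNReal.ofReal (C * (t - s) ^ ((1 - α) * (m + 1) + 1)) := by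
  have h1 : 0 < 1 - α := by linarith
  refine ⟨((1 - α)⁻¹) ^ (m + 1), by positivity, ?_⟩
  intro s t _ hst
  have hr : 0 ≤ t - s := by linarith
  set f : ℝ → ENNReal := (Set.Icc s t).indicator (fun _ => 1) with hf
  set g : ℝ → ENNReal :=
    (Set.Icc 0 (t - s)).indicator (fun x => ENNReal.ofReal (x ^ (-α))) with hg
  have hfm : Measurable f := measurable_const.indicator measurableSet_Icc
  have hgm : Measurable g := Measurable.indicator (by fun_prop) measurableSet_Icc
  have hgi : ∫⁻ x, g x = ENNReal.ofReal ((t - s) ^ (1 - α) / (1 - α)) := by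
    rw [← kernel_lintegral α hα1 _ hr, hg, lintegral_indicator measurableSet_Icc,
      lintegral_indicator measurableSet_Ioc]
    exact setLIntegral_congr Ioc_ae_eq_Icc.symm
  have hfi : ∫⁻ x, f x = ENNReal.ofReal (t - s) := by
    rw [hf, lintegral_indicator measurableSet_Icc]
    simp
  have hS : MeasurableSet {u : Fin (m + 2) → ℝ |
          s ≤ u 0 ∧ (∀ i : Fin (m + 1), u i.castSucc ≤ u i.succ) ∧ u (Fin.last (m + 1)) ≤ t} := by
    have a : MeasurableSet {u : Fin (m + 2) → ℝ | s ≤ u 0} :=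
      measurableSet_le (by fun_prop) (by fun_prop)
    have b : MeasurableSet {u : Fin (m + 2) → ℝ | u (Fin.last (m + 1)) ≤ t} :=
      measurableSet_le (by fun_prop) (by fun_prop)
    have c : MeasurableSet {u : Fin (m + 2) → ℝ | ∀ i : Fin (m + 1), u i.castSucc ≤ u i.succ} := by
      rw [Set.setOf_forall]
      exact MeasurableSet.iInter fun i => measurableSet_le (by fun_prop) (by fun_prop)
    exact a.inter (c.inter b)
  calc _ ≤ ∫⁻ u in {u : Fin (m + 2) → ℝ |
          s ≤ u 0 ∧ (∀ i : Fin (m + 1), u i.castSucc ≤ u i.succ) ∧ u (Fin.last (m + 1)) ≤ t},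
          f (u 0) * ∏ i : Fin (m + 1), g (u i.succ - u i.castSucc) := by
        refine setLIntegral_mono' hS ?_
        rintro u ⟨hu0, hu, hut⟩
        have hmono : Monotone u := Fin.monotone_iff_le_succ.2 hu
        have lo : ∀ j, s ≤ u j := fun j => hu0.trans (hmono (Fin.zero_le j))
        have hi : ∀ j, u j ≤ t := fun j => (hmono (Fin.le_last j)).trans hut
        have e1 : f (u 0) = 1 := Set.indicator_of_mem (show u 0 ∈ Set.Icc s t from ⟨lo 0, hi 0⟩) _
        have e2 : ∀ i : Fin (m + 1), g (u i.succ - u i.castSucc)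
            = ENNReal.ofReal ((u i.succ - u i.castSucc) ^ (-α)) := fun i =>
          Set.indicator_of_mem (show _ ∈ Set.Icc 0 (t - s) from
            ⟨by linarith [hu i], by linarith [lo i.castSucc, hi i.succ]⟩) _
        rw [e1, one_mul, ENNReal.ofReal_prod_of_nonneg
          (fun i _ => Real.rpow_nonneg (by linarith [hu i]) _)]
        simp only [e2, le_refl]
    _ ≤ ∫⁻ u : Fin (m + 2) → ℝ,
          f (u 0) * ∏ i : Fin (m + 1), g (u i.succ - u i.castSucc) := setLIntegral_le_lintegral _ _
    _ = _ := chain_lintegral g hgm (m + 1) f hfm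
    _ = _ := by
        rw [hgi, hfi, ← ENNReal.ofReal_pow (by positivity), ← ENNReal.ofReal_mul hr]
        congr 1
        rw [Real.rpow_add_of_nonneg hr (by positivity) zero_le_one, Real.rpow_one,
          Real.rpow_mul hr, div_eq_mul_inv, mul_pow, ← Real.rpow_natCast ((t - s) ^ (1 - α))]
        push_cast
        ring
    _ ≤ _ := le_rfl
end

section
/- Let H ∈ (0, 1/2), let δ ∈ (0, min(1, 1/H − 2)), let T > 0 and R > 0. There exists a constant C > 0, depending only on H, δ, T, R, such that for all real numbers s < u with u − s ≤ T and all r ∈ (0, R], one has ∫_s^u min( r (u − v)^{−2H}, r² (u − v)^{−3H} ) dv ≤ C r^{1+δ}. -/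
open MeasureTheory

/-- For `H ∈ (0,1/2)` and `δ ∈ (0, min(1, 1/H - 2))`, there is `C > 0` depending only on
`H, δ, T, R`, such that for all `s < u` with `u - s ≤ T` and all `r ∈ (0, R]`,
`∫_s^u min(r (u-v)^{-2H}, r² (u-v)^{-3H}) dv ≤ C r^{1+δ}`. -/
theorem stmt_4 (H δ T R : ℝ) (hH0 : 0 < H) (hH : H < 1 / 2)
    (hδ0 : 0 < δ) (hδ : δ < min 1 (1 / H - 2)) (hT : 0 < T) (hR : 0 < R) :
    ∃ C : ℝ, 0 < C ∧ ∀ s u r : ℝ, s < u → u - s ≤ T → 0 < r → r ≤ R →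
      ∫⁻ v in Set.Ioo s u,
        ENNReal.ofReal (min (r * (u - v) ^ (-(2 * H))) (r ^ 2 * (u - v) ^ (-(3 * H)))) ≤
      ENNReal.ofReal (C * r ^ (1 + δ)) := by
  obtain ⟨hδ1, hδ2⟩ := lt_min_iff.mp hδ
  obtain ⟨p, hp⟩ : ∃ p, p = (2 + δ) * H := ⟨_, rfl⟩
  have hp1 : p < 1 := by
    have : 2 + δ < 1 / H := by linarith
    rw [lt_div_iff₀ hH0] at this
    linarith
  have hq : 0 < -p + 1 := by linarith
  refine ⟨T ^ (-p + 1) / (-p + 1), by positivity, ?_⟩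
  intro s u r hsu hsT hr _
  have hpt : ∀ v ∈ Set.Ioo s u,
      min (r * (u - v) ^ (-(2 * H))) (r ^ 2 * (u - v) ^ (-(3 * H))) ≤
        r ^ (1 + δ) * (u - v) ^ (-p) := by
    intro v hv
    have hx : 0 < u - v := by linarith [hv.2]
    generalize u - v = x at hx
    have hk : 0 < r * x ^ (-H) := by positivity
    have ha : 0 < r * x ^ (-(2 * H)) := by positivity
    have e1 : r ^ 2 * x ^ (-(3 * H)) = (r * x ^ (-(2 * H))) * (r * x ^ (-H)) := by
      have : x ^ (-(3 * H)) = x ^ (-(2 * H)) * x ^ (-H) := by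
        rw [← Real.rpow_add hx]; congr 1; ring
      rw [this]; ring
    have e2 : r ^ (1 + δ) * x ^ (-p) = (r * x ^ (-(2 * H))) * (r * x ^ (-H)) ^ δ := by
      rw [Real.mul_rpow hr.le (by positivity), ← Real.rpow_mul hx.le, Real.rpow_add hr,
        Real.rpow_one]
      have : x ^ (-p) = x ^ (-(2 * H)) * x ^ (-H * δ) := by
        rw [← Real.rpow_add hx, hp]; congr 1; ring
      rw [this]; ring
    rw [e1, e2]
    rcases le_total (r * x ^ (-H)) 1 with h | h
    · refine (min_le_right _ _).trans (mul_le_mul_of_nonneg_left ?_ ha.le)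
      simpa using Real.rpow_le_rpow_of_exponent_ge hk h hδ1.le
    · refine (min_le_left _ _).trans (le_mul_of_one_le_right ha.le ?_)
      exact Real.one_le_rpow h hδ0.le
  have hint : IntervalIntegrable (fun v => r ^ (1 + δ) * (u - v) ^ (-p)) volume s u := by
    have h := (intervalIntegral.intervalIntegrable_rpow' (a := u - s) (b := 0)
      (r := -p) (by linarith)).comp_sub_left u
    simp only [sub_sub_cancel, sub_zero] at h
    exact h.const_mul _
  calc _ ≤ ∫⁻ v in Set.Ioo s u, ENNReal.ofReal (r ^ (1 + δ) * (u - v) ^ (-p)) :=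
        setLIntegral_mono' measurableSet_Ioo fun v hv => ENNReal.ofReal_le_ofReal (hpt v hv)
    _ = ENNReal.ofReal (∫ v in Set.Ioo s u, r ^ (1 + δ) * (u - v) ^ (-p)) := by
        rw [ofReal_integral_eq_lintegral_ofReal]
        · exact ((intervalIntegrable_iff_integrableOn_Ioo_of_le hsu.le).mp hint)
        · refine (ae_restrict_iff' measurableSet_Ioo).mpr (Filter.Eventually.of_forall ?_)
          intro v hv
          have hx : 0 < u - v := by linarith [hv.2]
          simp only [Pi.zero_apply]
          positivity
    _ ≤ _ := by
        apply ENNReal.ofReal_le_ofReal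
        rw [← integral_Ioc_eq_integral_Ioo, ← intervalIntegral.integral_of_le hsu.le,
          intervalIntegral.integral_const_mul,
          intervalIntegral.integral_comp_sub_left (fun x => x ^ (-p)),
          integral_rpow (Or.inl (by linarith)), sub_self, Real.zero_rpow hq.ne', sub_zero,
          mul_comm]
        have : 0 ≤ u - s := by linarith
        gcongr
end

section
/- Let H ∈ (0, 1/2), let δ ∈ (0, min(1, 1/H − 2)), let 0 < a < T and R > 0. There exists a constant C > 0, depending only on H, δ, a, T, R, such that for all r ∈ (0, R], the double time integral satisfies ∫_a^T ∫_a^T min( r |s − u|^{−2H}, r² |s − u|^{−3H} ) du ds ≤ C r^{1+δ}. -/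
open MeasureTheory

lemma aux_int (p L : ℝ) (hp : p < 1) (hL : 0 < L) :
    IntegrableOn (fun x : ℝ => |x| ^ (-p)) (Set.Icc (-L) L) := by
  have h1 : IntervalIntegrable (fun x : ℝ => |x| ^ (-p)) volume 0 L := by
    refine (intervalIntegral.intervalIntegrable_rpow' (r := -p) (a := 0) (b := L)
      (by linarith)).congr ?_
    intro x hx
    rw [Set.uIoc_of_le hL.le] at hx
    simp only [abs_of_pos hx.1]
  have h2 : IntervalIntegrable (fun x : ℝ => |x| ^ (-p)) volume (-L) 0 := by
    have h := (IntervalIntegrable.comp_sub_left h1 0).symm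
    simpa using h
  have h3 := h2.trans h1
  rwa [intervalIntegrable_iff_integrableOn_Icc_of_le (by linarith)] at h3

lemma aux_min (H δ r x : ℝ) (hδ0 : 0 < δ) (hδ1 : δ < 1) (hr : 0 < r) (hx : 0 ≤ x) :
    min (r * x ^ (-(2 * H))) (r ^ 2 * x ^ (-(3 * H))) ≤
      r ^ (1 + δ) * x ^ (-(2 * H)) * x ^ (-(δ * H)) := by
  rcases hx.eq_or_lt with rfl | hx
  · by_cases h : H = 0
    · subst h
      simp only [mul_zero, neg_zero, Real.rpow_zero, mul_one]
      rcases le_total r 1 with h | h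
      · refine (min_le_right _ _).trans ?_
        rw [← Real.rpow_natCast]
        exact Real.rpow_le_rpow_of_exponent_ge hr h (by push_cast; linarith)
      · refine (min_le_left _ _).trans ?_
        exact Real.self_le_rpow_of_one_le h (by linarith)
    · have h2 : -(2 * H) ≠ 0 := by simpa using h
      refine (min_le_left _ _).trans ?_
      simp [Real.zero_rpow h2]
  · set A := r * x ^ (-(2 * H)) with hA
    set B := r ^ 2 * x ^ (-(3 * H)) with hB
    have hA0 : 0 < A := by positivity
    have hB0 : 0 < B := by positivity
    have hm : 0 < min A B := lt_min hA0 hB0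
    have e1 : min A B = (min A B) ^ (1 - δ) * (min A B) ^ δ := by
      rw [← Real.rpow_add hm]; simp
    have e2 : (min A B) ^ (1 - δ) * (min A B) ^ δ ≤ A ^ (1 - δ) * B ^ δ := by
      apply mul_le_mul
      · exact Real.rpow_le_rpow hm.le (min_le_left _ _) (by linarith)
      · exact Real.rpow_le_rpow hm.le (min_le_right _ _) hδ0.le
      · positivity
      · positivity
    rw [e1]
    refine e2.trans (le_of_eq ?_)
    rw [hA, hB, Real.mul_rpow hr.le (by positivity), Real.mul_rpow (by positivity) (by positivity),
      ← Real.rpow_natCast r 2, ← Real.rpow_mul hr.le, ← Real.rpow_mul hx.le, ← Real.rpow_mul hx.le,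
      mul_mul_mul_comm, ← Real.rpow_add hr, ← Real.rpow_add hx, mul_assoc, ← Real.rpow_add hx]
    congr 2 <;> push_cast <;> ring

/-- For `H ∈ (0,1/2)` and `δ ∈ (0, min(1, 1/H - 2))`, there is `C > 0` depending only on
`H, δ, a, T, R`, such that for all `r ∈ (0, R]`,
`∫_a^T ∫_a^T min(r |s-u|^{-2H}, r² |s-u|^{-3H}) du ds ≤ C r^{1+δ}`. -/
theorem stmt_5 (H δ a T R : ℝ) (hH0 : 0 < H) (hH : H < 1 / 2)
    (hδ0 : 0 < δ) (hδ : δ < min 1 (1 / H - 2)) (ha : 0 < a) (haT : a < T) (hR : 0 < R) :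
    ∃ C : ℝ, 0 < C ∧ ∀ r : ℝ, 0 < r → r ≤ R →
      ∫⁻ s in Set.Icc a T, ∫⁻ u in Set.Icc a T,
        ENNReal.ofReal (min (r * |s - u| ^ (-(2 * H))) (r ^ 2 * |s - u| ^ (-(3 * H)))) ≤
      ENNReal.ofReal (C * r ^ (1 + δ)) := by
  have hδ1 : δ < 1 := hδ.trans_le (min_le_left _ _)
  have hδ2 : δ < 1 / H - 2 := hδ.trans_le (min_le_right _ _)
  set p := (2 + δ) * H with hp
  have hp1 : p < 1 := by
    have : 2 + δ < 1 / H := by linarith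
    rwa [lt_div_iff₀ hH0] at this
  set L := T - a with hL
  have hL0 : 0 < L := by linarith
  have hint := aux_int p L hp1 hL0
  set f : ℝ → ENNReal := fun x => ENNReal.ofReal (|x| ^ (-p)) with hf
  set K : ENNReal := ∫⁻ x in Set.Icc (-L) L, f x with hK
  have hKfin : K ≠ ⊤ := by
    exact (hint.lintegral_lt_top).ne
  refine ⟨K.toReal * L + 1, by positivity, ?_⟩
  intro r hr _
  have hinner : ∀ s ∈ Set.Icc a T, (∫⁻ u in Set.Icc a T,
        ENNReal.ofReal (min (r * |s - u| ^ (-(2 * H))) (r ^ 2 * |s - u| ^ (-(3 * H))))) ≤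
        ENNReal.ofReal (r ^ (1 + δ)) * K := by
    intro s hs
    calc _ ≤ ∫⁻ u in Set.Icc a T, ENNReal.ofReal (r ^ (1 + δ)) * f (s - u) := by
          refine lintegral_mono fun u => ?_
          rw [hf]
          simp only
          rw [← ENNReal.ofReal_mul (by positivity)]
          apply ENNReal.ofReal_le_ofReal
          refine (aux_min H δ r _ hδ0 hδ1 hr (abs_nonneg _)).trans (le_of_eq ?_)
          rw [mul_assoc, ← Real.rpow_add' (abs_nonneg _) (by nlinarith [mul_pos hδ0 hH0]), hp]
          congr 2
          ring
      _ = ENNReal.ofReal (r ^ (1 + δ)) * ∫⁻ u in Set.Icc a T, f (s - u) :=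
          lintegral_const_mul' _ _ ENNReal.ofReal_ne_top
      _ ≤ ENNReal.ofReal (r ^ (1 + δ)) * K := by
          gcongr
          rw [hK, ← lintegral_indicator measurableSet_Icc, ← lintegral_indicator measurableSet_Icc,
            ← lintegral_sub_left_eq_self ((Set.Icc (-L) L).indicator f) s]
          refine lintegral_mono fun u => ?_
          by_cases hu : u ∈ Set.Icc a T
          · have : s - u ∈ Set.Icc (-L) L :=
              ⟨by linarith [hs.1, hu.2], by linarith [hs.2, hu.1]⟩
            simp [Set.indicator_of_mem hu, Set.indicator_of_mem this]
          · simp [Set.indicator_of_notMem hu]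
  calc _ ≤ ∫⁻ s in Set.Icc a T, ENNReal.ofReal (r ^ (1 + δ)) * K :=
        setLIntegral_mono' measurableSet_Icc hinner
    _ = ENNReal.ofReal (r ^ (1 + δ)) * K * ENNReal.ofReal L := by
        rw [setLIntegral_const, Real.volume_Icc]
    _ = ENNReal.ofReal (K.toReal * L * r ^ (1 + δ)) := by
        rw [ENNReal.ofReal_mul (by positivity), ENNReal.ofReal_mul (by positivity),
          ENNReal.ofReal_toReal hKfin]
        ring
    _ ≤ _ := by
        apply ENNReal.ofReal_le_ofReal
        gcongr
        linarith
end

section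
/- Let T > 0, γ ∈ (0, 1), G > 0, and let X : [0, T] → ℝ be a function satisfying |X_u − X_s| ≤ G|u − s|^γ for all s, u ∈ [0, T]. Fix t ∈ [0, T) and suppose L : [0, T] × ℝ → [0, ∞) is a function such that for every δ ∈ (0, T − t] and every Borel set A ⊆ ℝ, ∫_A (L(t+δ, x) − L(t, x)) dx = λ({s ∈ [t, t+δ] : X_s ∈ A}), where λ is Lebesgue measure on ℝ (i.e., x ↦ L(t+δ, x) − L(t, x) is an occupation density for X on [t, t+δ]). Then for every α > 1 − γ, one has limsup_{δ ↓ 0} sup_{x ∈ ℝ} (L(t+δ, x) − L(t, x)) / δ^α = ∞. -/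
open MeasureTheory Set Filter Topology
open scoped ENNReal

/-- Deterministic upper bound on the time-Hölder exponent of an occupation density:
if `X` is `γ`-Hölder on `[0,T]` with constant `G`, `t ∈ [0,T)`, and for each
`δ ∈ (0, T-t]` the function `x ↦ L(t+δ,x) - L(t,x)` is an occupation density of `X`
on `[t, t+δ]`, then for every `α > 1 - γ`,
`limsup_{δ↓0} sup_x (L(t+δ,x) - L(t,x)) / δ^α = ∞`. -/
theorem stmt_8 (T γ G : ℝ) (hT : 0 < T) (hγ0 : 0 < γ) (hγ1 : γ < 1) (hG : 0 < G)
    (X : ℝ → ℝ)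
    (hX : ∀ s ∈ Icc (0 : ℝ) T, ∀ u ∈ Icc (0 : ℝ) T, |X u - X s| ≤ G * |u - s| ^ γ)
    (t : ℝ) (ht : t ∈ Ico (0 : ℝ) T)
    (L : ℝ → ℝ → ℝ) (hL0 : ∀ r x, 0 ≤ L r x)
    (hocc : ∀ δ : ℝ, 0 < δ → δ ≤ T - t → ∀ A : Set ℝ, MeasurableSet A →
      ∫ x in A, (L (t + δ) x - L t x) =
        (volume {s ∈ Icc t (t + δ) | X s ∈ A}).toReal)
    (α : ℝ) (hα : 1 - γ < α) :
    Filter.limsup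
      (fun δ : ℝ =>
        (⨆ x : ℝ, ENNReal.ofReal (L (t + δ) x - L t x)) / ENNReal.ofReal (δ ^ α))
      (𝓝[>] (0 : ℝ)) = ⊤ := by
  have key : ∀ δ : ℝ, 0 < δ → δ ≤ T - t →
      ENNReal.ofReal (δ ^ (-(α - (1 - γ))) * (1 / (2 * G))) ≤
        (⨆ x : ℝ, ENNReal.ofReal (L (t + δ) x - L t x)) / ENNReal.ofReal (δ ^ α) := by
    intro δ hδ hδT
    set S := ⨆ x : ℝ, ENNReal.ofReal (L (t + δ) x - L t x) with hS
    have hpow : 0 < δ ^ γ := Real.rpow_pos_of_pos hδ γ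
    have hpα : 0 < δ ^ α := Real.rpow_pos_of_pos hδ α
    set A := Metric.closedBall (X t) (G * δ ^ γ) with hA
    have hset : {s ∈ Icc t (t + δ) | X s ∈ A} = Icc t (t + δ) := by
      ext s
      simp only [mem_sep_iff, and_iff_left_iff_imp]
      intro hs
      rw [hA, Metric.mem_closedBall, Real.dist_eq]
      refine (hX t ⟨ht.1, ht.2.le⟩ s ⟨ht.1.trans hs.1, by linarith [hs.2]⟩).trans ?_
      have h1 : |s - t| ≤ δ := by
        rw [abs_of_nonneg (by linarith [hs.1])]; linarith [hs.2]
      gcongr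
    have hint := hocc δ hδ hδT A Metric.isClosed_closedBall.measurableSet
    rw [hset, Real.volume_Icc, add_sub_cancel_left, ENNReal.toReal_ofReal hδ.le] at hint
    have hI : Integrable (fun x => L (t + δ) x - L t x) (volume.restrict A) := by
      by_contra h
      rw [integral_undef h] at hint
      linarith
    rw [integral_eq_lintegral_pos_part_sub_lintegral_neg_part hI] at hint
    have h1 : ENNReal.ofReal δ ≤ S * ENNReal.ofReal (2 * (G * δ ^ γ)) := by
      calc ENNReal.ofReal δ
          ≤ ENNReal.ofReal (∫⁻ x in A, ENNReal.ofReal (L (t + δ) x - L t x)).toReal := by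
            apply ENNReal.ofReal_le_ofReal
            exact hint.symm.le.trans (sub_le_self _ ENNReal.toReal_nonneg)
        _ ≤ ∫⁻ x in A, ENNReal.ofReal (L (t + δ) x - L t x) := ENNReal.ofReal_toReal_le
        _ ≤ ∫⁻ x in A, S := by
            apply lintegral_mono
            intro x
            exact le_iSup (fun x : ℝ => ENNReal.ofReal (L (t + δ) x - L t x)) x
        _ = S * ENNReal.ofReal (2 * (G * δ ^ γ)) := by
            rw [setLIntegral_const, hA, Real.volume_closedBall]
    rw [ENNReal.le_div_iff_mul_le (Or.inl (by simpa using hpα)) (Or.inl ENNReal.ofReal_ne_top),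
      ← ENNReal.ofReal_mul (by positivity)]
    have h2 : δ ^ (-(α - (1 - γ))) * (1 / (2 * G)) * δ ^ α = δ / (2 * (G * δ ^ γ)) := by
      have : δ ^ (-(α - (1 - γ))) * δ ^ α * δ ^ γ = δ := by
        rw [← Real.rpow_add hδ, ← Real.rpow_add hδ]
        ring_nf
        exact Real.rpow_one δ
      field_simp
      linarith
    rw [h2, ENNReal.ofReal_div_of_pos (by positivity)]
    exact ENNReal.div_le_of_le_mul h1
  have hev : ∀ᶠ δ in 𝓝[>] (0 : ℝ), 0 < δ ∧ δ ≤ T - t := by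
    filter_upwards [Ioc_mem_nhdsGT (sub_pos.2 ht.2)] with δ h using h
  apply Tendsto.limsup_eq
  have hlim : Tendsto (fun δ : ℝ => ENNReal.ofReal (δ ^ (-(α - (1 - γ))) * (1 / (2 * G))))
      (𝓝[>] (0 : ℝ)) (𝓝 ⊤) :=
    ENNReal.tendsto_ofReal_atTop.comp
      ((tendsto_rpow_neg_nhdsGT_zero (by linarith)).atTop_mul_const (by positivity))
  refine tendsto_nhds_top_mono hlim ?_
  filter_upwards [hev] with δ h using key δ h.1 h.2
end

section
/- Let f : ℝ → [0, ∞) be a Borel measurable function, let s ≤ t be real numbers, and let n ≥ 1 be an integer. Then ( ∫_s^t f(u) du )^n = n! ∫_{s ≤ u₁ ≤ u₂ ≤ ⋯ ≤ u_n ≤ t} f(u₁) f(u₂) ⋯ f(u_n) du₁ ⋯ du_n. -/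
open MeasureTheory Set
open scoped ENNReal

lemma aux_tonelli (g : ℝ → ℝ≥0∞) (hg : Measurable g) (n : ℕ) :
    ∫⁻ u : Fin n → ℝ, ∏ i, g (u i) = (∫⁻ x, g x) ^ n := by
  induction n with
  | zero => simp [volume_pi]
  | succ n ih =>
    have h := (volume_preserving_piFinSuccAbove (fun _ : Fin (n + 1) => ℝ) 0).symm
    rw [← h.lintegral_comp (by fun_prop)]
    have h2 : ∀ x : ℝ × (Fin n → ℝ), (∏ i, g ((MeasurableEquiv.piFinSuccAbove
        (fun _ : Fin (n + 1) => ℝ) 0).symm x i)) = g x.1 * ∏ i, g (x.2 i) := by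
      intro x
      rw [Fin.prod_univ_succ]
      rfl
    simp_rw [h2]
    rw [Measure.volume_eq_prod, lintegral_prod_mul (f := g) (g := fun y : Fin n → ℝ => ∏ i, g (y i))
      hg.aemeasurable (Measurable.aemeasurable (by fun_prop)), ih, pow_succ, mul_comm]

lemma aux_inj (n : ℕ) : ∀ᵐ u : Fin n → ℝ, Function.Injective u := by
  have h : ∀ i j : Fin n, i ≠ j → ∀ᵐ u : Fin n → ℝ, u i ≠ u j := by
    intro i j hij
    let p : Submodule ℝ (Fin n → ℝ) :=
      LinearMap.ker (LinearMap.proj (R := ℝ) (φ := fun _ : Fin n => ℝ) i - LinearMap.proj j)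
    have hp : p ≠ ⊤ := by
      intro hp
      have : Pi.single i (1 : ℝ) ∈ p := by rw [hp]; trivial
      simp [p, LinearMap.mem_ker, hij.symm] at this
    have h0 := Measure.addHaar_submodule (volume : Measure (Fin n → ℝ)) p hp
    rw [ae_iff]
    convert h0 using 2
    ext u
    simp [p, LinearMap.mem_ker, sub_eq_zero]
  have h2 : ∀ᵐ u : Fin n → ℝ, ∀ i j : Fin n, i ≠ j → u i ≠ u j := by
    rw [ae_all_iff]; intro i
    rw [ae_all_iff]; intro j
    by_cases hij : i = j
    · simp [hij]
    · filter_upwards [h i j hij] with u hu _ using hu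
  filter_upwards [h2] with u hu i j hij
  by_contra hne
  exact hu i j hne hij

lemma aux_perm {n : ℕ} (F : (Fin n → ℝ) → ℝ≥0∞) (hF : Measurable F) (σ : Equiv.Perm (Fin n)) :
    ∫⁻ u, F (u ∘ σ) = ∫⁻ u, F u := by
  have h := (volume_measurePreserving_piCongrLeft (fun _ : Fin n => ℝ) σ.symm)
  rw [← h.lintegral_comp hF]
  congr 1
  ext u
  congr 1
  ext i
  have := MeasurableEquiv.piCongrLeft_apply_apply σ.symm (β := fun _ : Fin n => ℝ) u (σ i)
  simp only [Equiv.symm_apply_apply] at this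
  exact this.symm

/-- Symmetrization identity: for a nonnegative Borel function `f` and `s ≤ t`,
`(∫_s^t f)^n = n! ∫_{s ≤ u₁ ≤ ⋯ ≤ u_n ≤ t} f(u₁)⋯f(u_n) du`. Both sides may be `+∞`
simultaneously, so the identity is stated with lower integrals. -/
theorem stmt_9 (f : ℝ → ℝ) (hf : Measurable f) (hf0 : ∀ x, 0 ≤ f x)
    (s t : ℝ) (hst : s ≤ t) (n : ℕ) (hn : 1 ≤ n) :
    (∫⁻ u in Icc s t, ENNReal.ofReal (f u)) ^ n =
      (n.factorial : ℝ≥0∞) *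
        ∫⁻ u in {u : Fin n → ℝ | Monotone u ∧ ∀ i, u i ∈ Icc s t},
          ENNReal.ofReal (∏ i, f (u i)) := by
  classical
  set g : ℝ → ℝ≥0∞ := (Icc s t).indicator (fun u => ENNReal.ofReal (f u)) with hgdef
  have hg : Measurable g := (by fun_prop : Measurable fun u => ENNReal.ofReal (f u)).indicator
    measurableSet_Icc
  have hM : MeasurableSet {u : Fin n → ℝ | Monotone u} := by
    have : {u : Fin n → ℝ | Monotone u} = ⋂ i, ⋂ j, ⋂ (_ : i ≤ j), {u | u i ≤ u j} := by
      ext u; simp [Monotone]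
    rw [this]
    exact MeasurableSet.iInter fun i => MeasurableSet.iInter fun j => MeasurableSet.iInter fun _ =>
      measurableSet_le (measurable_pi_apply i) (measurable_pi_apply j)
  have hI : MeasurableSet {u : Fin n → ℝ | ∀ i, u i ∈ Icc s t} := by
    have : {u : Fin n → ℝ | ∀ i, u i ∈ Icc s t} = ⋂ i, {u | u i ∈ Icc s t} := by
      ext u; simp
    rw [this]
    exact MeasurableSet.iInter fun i => measurable_pi_apply i measurableSet_Icc
  set F : (Fin n → ℝ) → ℝ≥0∞ :=
    {u : Fin n → ℝ | Monotone u}.indicator (fun u => ∏ i, g (u i)) with hFdef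
  have hF : Measurable F := (by fun_prop : Measurable fun u : Fin n → ℝ => ∏ i, g (u i)).indicator hM
  have hR : ∫⁻ u in {u : Fin n → ℝ | Monotone u ∧ ∀ i, u i ∈ Icc s t},
          ENNReal.ofReal (∏ i, f (u i)) = ∫⁻ u, F u := by
    rw [← lintegral_indicator (show MeasurableSet {u : Fin n → ℝ | Monotone u ∧ ∀ i, u i ∈ Icc s t} from
      hM.inter hI)]
    congr 1
    ext u
    by_cases h1 : Monotone u
    · by_cases h2 : ∀ i, u i ∈ Icc s t
      · rw [indicator_of_mem (show u ∈ {u : Fin n → ℝ | Monotone u ∧ ∀ i, u i ∈ Icc s t} from ⟨h1, h2⟩), hFdef,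
          indicator_of_mem (show u ∈ {u : Fin n → ℝ | Monotone u} from h1),
          ENNReal.ofReal_prod_of_nonneg (fun i _ => hf0 _)]
        exact Finset.prod_congr rfl fun i _ => by
          rw [hgdef, indicator_of_mem (h2 i)]
      · rw [indicator_of_notMem (fun h => h2 h.2), hFdef,
          indicator_of_mem (show u ∈ {u : Fin n → ℝ | Monotone u} from h1)]
        push Not at h2
        obtain ⟨i, hi⟩ := h2
        exact (Finset.prod_eq_zero (Finset.mem_univ i) (indicator_of_notMem hi _)).symm
    · rw [indicator_of_notMem (fun h => h1 h.1), hFdef, indicator_of_notMem h1]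
  rw [hR, ← lintegral_indicator measurableSet_Icc, ← aux_tonelli g hg n]
  have key : ∀ᵐ u : Fin n → ℝ, ∏ i, g (u i) = ∑ σ : Equiv.Perm (Fin n), F (u ∘ σ) := by
    filter_upwards [aux_inj n] with u hu
    rw [Finset.sum_eq_single (Tuple.sort u)]
    · rw [hFdef, indicator_of_mem (show u ∘ _ ∈ {u : Fin n → ℝ | Monotone u} from
        Tuple.monotone_sort u)]
      exact (Equiv.prod_comp (Tuple.sort u) (fun i => g (u i))).symm
    · intro σ _ hσ
      rw [hFdef, indicator_of_notMem]
      intro h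
      apply hσ
      have := Tuple.comp_sort_eq_comp_iff_monotone.2 h
      ext i
      exact congrArg Fin.val (hu (congrFun this i))
    · simp
  rw [lintegral_congr_ae key, lintegral_finsetSum]
  · simp_rw [aux_perm F hF]
    simp [Fintype.card_perm]
  · intro σ _
    exact hF.comp (by fun_prop)
end
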